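/- Let f : ℝ^n → ℝ^m, let Ω ⊆ ℝ^n, and let Y ⊂ ℝ^m be a nonempty finite set whose elements are pairwise incomparable (for all r¹, r² ∈ Y, neither r¹ ≤ r² nor r² ≤ r¹). If x¹, x² ∈ Ω satisfy f(x¹) ≤ f(x²) (componentwise inequality with at least one strict component), then ψ^Do_Y(x¹) ≤ ψ^Do_Y(x²). -/

import Mathlib

/-- `r` dominates `y` in the Pareto sense: `r ≤ y` componentwise with at least
one strict inequality. -/
def paretoLE {m : ℕ} (r y : Fin m → ℝ) : Prop :=
  (∀ i, r i ≤ y i) ∧ ∃ i, r i < y i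

open Classical in
/-- The single-objective dominance move function `ψ^Do_Y`. -/
noncomputable def psiDo {n m : ℕ} (f : (Fin n → ℝ) → (Fin m → ℝ))
    (Y : Finset (Fin m → ℝ)) (hY : Y.Nonempty) (x : Fin n → ℝ) : ℝ :=
  if ∃ r ∈ Y, paretoLE r (f x) then
    Y.inf' hY fun r => ∑ i, max 0 (f x i - r i)
  else
    - Y.inf' hY fun r => ∑ i, max 0 (r i - f x i)

/-!
The set of dominated points is an upper set, so increasing `f x` can only lead from the
non-dominated regime, where `ψ^Do_Y ≤ 0`, to the dominated one, where `ψ^Do_Y ≥ 0`. Within each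
regime, monotonicity holds because the cost of moving `a` until it weakly dominates `b` is monotone
in `a` and antitone in `b`.
-/

section DominanceMove

variable {ι α : Type*} [Fintype ι] [AddCommGroup α] [LinearOrder α]

/-- The dominance move from `a` to `b`: the least total decrease of the coordinates of `a` that
makes it weakly dominate `b`. Both branches of `psiDo` minimise it over `Y`, with the roles of the
reference point and the objective vector exchanged. -/
def dominanceMove (a b : ι → α) : α :=
  ∑ i, max 0 (a i - b i)

variable [IsOrderedAddMonoid α]

theorem dominanceMove_nonneg (a b : ι → α) : 0 ≤ dominanceMove a b :=
  Finset.sum_nonneg fun _ _ => le_max_left _ _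

theorem dominanceMove_le_dominanceMove {a a' b b' : ι → α} (ha : a ≤ a') (hb : b' ≤ b) :
    dominanceMove a b ≤ dominanceMove a' b' :=
  Finset.sum_le_sum fun i _ => max_le_max_left 0 (sub_le_sub (ha i) (hb i))

end DominanceMove

section IsDominated

variable {m : ℕ}

theorem paretoLE.trans_le {r y z : Fin m → ℝ} (hry : paretoLE r y) (hyz : y ≤ z) :
    paretoLE r z :=
  let ⟨hle, i, hlt⟩ := hry
  ⟨fun j => (hle j).trans (hyz j), i, hlt.trans_le (hyz i)⟩

/-- `y` is dominated by some element of `Y`; this is the condition separating the two branches of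
`psiDo`. -/
def IsDominated (Y : Set (Fin m → ℝ)) (y : Fin m → ℝ) : Prop :=
  ∃ r ∈ Y, paretoLE r y

theorem IsDominated.mono {Y : Set (Fin m → ℝ)} {y z : Fin m → ℝ} (hy : IsDominated Y y)
    (hyz : y ≤ z) : IsDominated Y z :=
  let ⟨r, hr, hry⟩ := hy
  ⟨r, hr, hry.trans_le hyz⟩

end IsDominated

section PsiDo

variable {n m : ℕ} {f : (Fin n → ℝ) → (Fin m → ℝ)} {Y : Finset (Fin m → ℝ)} {x : Fin n → ℝ}

theorem psiDo_of_isDominated (hY : Y.Nonempty) (h : IsDominated Y (f x)) :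
    psiDo f Y hY x = Y.inf' hY fun r => dominanceMove (f x) r :=
  if_pos h

theorem psiDo_of_not_isDominated (hY : Y.Nonempty) (h : ¬ IsDominated Y (f x)) :
    psiDo f Y hY x = -Y.inf' hY fun r => dominanceMove r (f x) :=
  if_neg h

theorem psiDo_nonneg_of_isDominated (hY : Y.Nonempty) (h : IsDominated Y (f x)) :
    0 ≤ psiDo f Y hY x := by
  rw [psiDo_of_isDominated hY h]
  exact Finset.le_inf' _ _ fun r _ => dominanceMove_nonneg (f x) r

theorem psiDo_nonpos_of_not_isDominated (hY : Y.Nonempty) (h : ¬ IsDominated Y (f x)) :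
    psiDo f Y hY x ≤ 0 := by
  rw [psiDo_of_not_isDominated hY h, neg_nonpos]
  exact Finset.le_inf' _ _ fun r _ => dominanceMove_nonneg r (f x)

end PsiDo

theorem psiDo_mono_general {n m : ℕ} (f : (Fin n → ℝ) → (Fin m → ℝ)) (Y : Finset (Fin m → ℝ))
    (hY : Y.Nonempty) {x1 x2 : Fin n → ℝ} (hle : f x1 ≤ f x2) :
    psiDo f Y hY x1 ≤ psiDo f Y hY x2 := by
  by_cases h1 : IsDominated Y (f x1)
  · have h2 : IsDominated Y (f x2) := h1.mono hle
    rw [psiDo_of_isDominated hY h1, psiDo_of_isDominated hY h2]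
    exact Finset.inf'_mono_fun fun r _ => dominanceMove_le_dominanceMove hle le_rfl
  · by_cases h2 : IsDominated Y (f x2)
    · exact (psiDo_nonpos_of_not_isDominated hY h1).trans (psiDo_nonneg_of_isDominated hY h2)
    · rw [psiDo_of_not_isDominated hY h1, psiDo_of_not_isDominated hY h2]
      exact neg_le_neg <|
        Finset.inf'_mono_fun fun r _ => dominanceMove_le_dominanceMove le_rfl hle

/-- Pareto dominance `f(x¹) ≤ f(x²)` (componentwise with at least
one strict component) implies `ψ^Do_Y(x¹) ≤ ψ^Do_Y(x²)`. -/
theorem psiDo_mono {n m : ℕ} (f : (Fin n → ℝ) → (Fin m → ℝ))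
    (Ω : Set (Fin n → ℝ)) (Y : Finset (Fin m → ℝ)) (hY : Y.Nonempty)
    (hinc : ∀ r1 ∈ Y, ∀ r2 ∈ Y, ¬ paretoLE r1 r2 ∧ ¬ paretoLE r2 r1)
    (x1 x2 : Fin n → ℝ) (hx1 : x1 ∈ Ω) (hx2 : x2 ∈ Ω)
    (hdom : paretoLE (f x1) (f x2)) :
    psiDo f Y hY x1 ≤ psiDo f Y hY x2 :=
  psiDo_mono_general f Y hY hdom.1
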